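/- Let ρ ≥ 1 and let (X, D) be a ρ-metric space. Let P ⊆ X be a finite set with weight function w : P → [0,∞), and let p ↦ p' be a map from P into a finite set B ⊆ X. Let C ⊆ X be a finite nonempty set, let α ≥ 0, and assume Σ_{q∈P} w(q)·D(q, q') ≤ α·Σ_{q∈P} w(q)·D(q, C). For b ∈ B let P_b := {q ∈ P : q' = b}. Then for every p ∈ P with p ∈ P_b, D(p', C) · Σ_{q∈P_b} w(q) ≤ ρ·(α + 1)·Σ_{q∈P} w(q)·D(q, C). -/

import Mathlib

open Finset

/-- Distance from a point to a finite set of centers: `D(x,C) = min_{c ∈ C} D(x,c)`. -/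
noncomputable def distToSet {X : Type*} (D : X → X → ℝ) (x : X) (C : Finset X) : ℝ :=
  sInf ((fun c => D x c) '' C)

lemma distToSet_le {X : Type*} {D : X → X → ℝ} {x c : X} {C : Finset X} (hc : c ∈ C) :
    distToSet D x C ≤ D x c :=
  csInf_le (C.finite_toSet.image _).bddBelow ⟨c, hc, rfl⟩

lemma exists_distToSet_eq {X : Type*} (D : X → X → ℝ) (x : X) {C : Finset X}
    (hC : C.Nonempty) : ∃ c ∈ C, D x c = distToSet D x C :=
  (hC.to_set.image fun c => D x c).csInf_mem (C.finite_toSet.image _)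

lemma distToSet_nonneg {X : Type*} {D : X → X → ℝ} (hnonneg : ∀ x y, 0 ≤ D x y) (x : X)
    (C : Finset X) : 0 ≤ distToSet D x C :=
  Real.sInf_nonneg (by rintro _ ⟨c, -, rfl⟩; exact hnonneg x c)

lemma distToSet_le_mul_add {X : Type*} {D : X → X → ℝ} {ρ : ℝ}
    (htri : ∀ x y z, D x z ≤ ρ * (D x y + D y z)) (x y : X) {C : Finset X}
    (hC : C.Nonempty) : distToSet D x C ≤ ρ * (D x y + distToSet D y C) := by
  obtain ⟨c, hc, h⟩ := exists_distToSet_eq D y hC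
  exact h ▸ (distToSet_le hc).trans (htri x y c)

/-- Key intermediate inequality in the sensitivity bound: in a ρ-metric space, if the
weighted connection cost of `p ↦ p'` is at most `α` times the weighted clustering cost to
`C`, then for every `p ∈ P` (with cluster `P_b`, `b = p'`),
`D(p',C) · ∑_{q ∈ P_b} w(q) ≤ ρ·(α+1)·∑_{q ∈ P} w(q)·D(q,C)`. -/
theorem cluster_center_cost_bound {X : Type*} [DecidableEq X] (D : X → X → ℝ)
    (ρ : ℝ) (hρ1 : 1 ≤ ρ)
    (hsymm : ∀ x y, D x y = D y x) (hnonneg : ∀ x y, 0 ≤ D x y)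
    (htri : ∀ x y z, D x z ≤ ρ * (D x y + D y z))
    (P : Finset X) (w : X → ℝ) (hw : ∀ p ∈ P, 0 ≤ w p)
    (B : Finset X) (π : X → X) (hπB : ∀ p ∈ P, π p ∈ B)
    (C : Finset X) (hC : C.Nonempty)
    (α : ℝ) (hα : 0 ≤ α)
    (hcost : ∑ q ∈ P, w q * D q (π q) ≤ α * ∑ q ∈ P, w q * distToSet D q C) :
    ∀ p ∈ P,
      distToSet D (π p) C * (∑ q ∈ P.filter fun q => π q = π p, w q) ≤
        ρ * (α + 1) * ∑ q ∈ P, w q * distToSet D q C := by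
  intro p _
  have hρ : 0 ≤ ρ := zero_le_one.trans hρ1
  calc distToSet D (π p) C * (∑ q ∈ P.filter fun q => π q = π p, w q)
      = ∑ q ∈ P.filter fun q => π q = π p, w q * distToSet D (π q) C := by
        rw [mul_comm, sum_mul]
        exact sum_congr rfl fun q hq => by rw [(mem_filter.mp hq).2]
    _ ≤ ∑ q ∈ P, w q * distToSet D (π q) C :=
        sum_le_sum_of_subset_of_nonneg (filter_subset _ _) fun q hq _ =>
          mul_nonneg (hw q hq) (distToSet_nonneg hnonneg _ _)
    _ ≤ ∑ q ∈ P, w q * (ρ * (D q (π q) + distToSet D q C)) :=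
        sum_le_sum fun q hq => mul_le_mul_of_nonneg_left
          (hsymm (π q) q ▸ distToSet_le_mul_add htri (π q) q hC) (hw q hq)
    _ = ρ * (∑ q ∈ P, w q * D q (π q) + ∑ q ∈ P, w q * distToSet D q C) := by
        rw [← sum_add_distrib, mul_sum]
        exact sum_congr rfl fun q _ => by ring
    _ ≤ ρ * (α * ∑ q ∈ P, w q * distToSet D q C + ∑ q ∈ P, w q * distToSet D q C) := by
        gcongr
    _ = ρ * (α + 1) * ∑ q ∈ P, w q * distToSet D q C := by ring
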